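/- arXiv:2406.01350 — 9 statements merged into one kernel-verified Lean document; each statement's English description precedes it below -/
import Mathlib

section
/- On three qubits, no list of at most two CNOT gates has composition equal to the cyclic-shift permutation gate x ↦ x ∘ c, where c : Fin 3 → Fin 3 is the 3-cycle sending j to j+1 (mod 3). -/
/-- The CNOT gate with control `a` and target `b` acting on computational
basis states of an `n`-qubit system. -/
def CNOT {n : ℕ} (a b : Fin n) (x : Fin n → Bool) : Fin n → Bool :=
  fun j => if j = b then xor (x a) (x b) else x j

/-- The composition of a list of CNOT gates, applied in order. -/
def circuit {n : ℕ} (L : List (Fin n × Fin n)) (x : Fin n → Bool) : Fin n → Bool :=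
  L.foldl (fun y g => CNOT g.1 g.2 y) x

/-- A circuit leaves unchanged every qubit that is not the target of one of its gates. -/
theorem circuit_apply_of_notMem_targets {n : ℕ} {L : List (Fin n × Fin n)} {j : Fin n}
    (hj : j ∉ L.map Prod.snd) (x : Fin n → Bool) : circuit L x j = x j := by
  induction L generalizing x with
  | nil => rfl
  | cons g L ih =>
    rw [List.map_cons, List.mem_cons, not_or] at hj
    exact (ih hj.2 (CNOT g.1 g.2 x)).trans (if_neg hj.1)

/-- On three qubits, no list of at most two CNOT gates realizes the cyclic shift
`j ↦ j + 1 (mod 3)`. -/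
theorem no_two_cnot_cycle3 (L : List (Fin 3 × Fin 3))
    (hL : ∀ g ∈ L, g.1 ≠ g.2) (hlen : L.length ≤ 2) :
    circuit L ≠ fun x => x ∘ (finRotate 3) := by
  intro h
  obtain ⟨j, hj⟩ : ∃ j, j ∉ L.map Prod.snd := by
    by_contra! hall
    have hsub : (Finset.univ : Finset (Fin 3)) ⊆ (L.map Prod.snd).toFinset :=
      fun j _ => List.mem_toFinset.2 (hall j)
    have hcard := (Finset.card_le_card hsub).trans (List.toFinset_card_le _)
    rw [Finset.card_fin, List.length_map] at hcard
    omega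
  have hfix := circuit_apply_of_notMem_targets hj (fun i => decide (i = j))
  rw [h] at hfix
  simp at hfix
end

section
/- On three qubits, no list of exactly three CNOT gates has composition equal to the cyclic-shift permutation gate x ↦ x ∘ c, where c : Fin 3 → Fin 3 is the 3-cycle sending j to j+1 (mod 3). -/
/-- Any three CNOT gates on three qubits send some basis state of Hamming weight one to a state
other than its cyclic shift. -/
theorem exists_basis_state_circuit_ne : ∀ g₁ g₂ g₃ : Fin 3 × Fin 3,
    g₁.1 ≠ g₁.2 → g₂.1 ≠ g₂.2 → g₃.1 ≠ g₃.2 →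
      ∃ i j : Fin 3, circuit [g₁, g₂, g₃] (fun k => decide (k = i)) j ≠
        decide (finRotate 3 j = i) := by
  decide +kernel

/-- On three qubits, no list of exactly three CNOT gates realizes the cyclic shift
`j ↦ j + 1 (mod 3)`. -/
theorem no_three_cnot_cycle3 (L : List (Fin 3 × Fin 3))
    (hL : ∀ g ∈ L, g.1 ≠ g.2) (hlen : L.length = 3) :
    circuit L ≠ fun x => x ∘ (finRotate 3) := by
  obtain ⟨g₁, g₂, g₃, rfl⟩ := List.length_eq_three.mp hlen
  intro h
  obtain ⟨i, j, hij⟩ := exists_basis_state_circuit_ne g₁ g₂ g₃ (hL g₁ (by simp))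
    (hL g₂ (by simp)) (hL g₃ (by simp))
  exact hij (congrFun (congrFun h _) j)
end

section
/- On three qubits, no list of exactly four CNOT gates has composition equal to the cyclic-shift permutation gate x ↦ x ∘ c, where c : Fin 3 → Fin 3 is the 3-cycle sending j to j+1 (mod 3). -/
/-- Every circuit of four genuine CNOT gates on three qubits differs from the cyclic shift in some
coordinate of the image of some standard basis vector. -/
theorem exists_circuit_four_ne_finRotate :
    ∀ a b : Fin 3, a ≠ b → ∀ c d : Fin 3, c ≠ d → ∀ e f : Fin 3, e ≠ f → ∀ g h : Fin 3, g ≠ h →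
      ∃ i j : Fin 3, circuit [(a, b), (c, d), (e, f), (g, h)] (fun k => decide (k = i)) j ≠
        decide (finRotate 3 j = i) := by
  decide +kernel

/-- On three qubits, no list of exactly four CNOT gates realizes the cyclic shift
`j ↦ j + 1 (mod 3)`. -/
theorem no_four_cnot_cycle3 (L : List (Fin 3 × Fin 3))
    (hL : ∀ g ∈ L, g.1 ≠ g.2) (hlen : L.length = 4) :
    circuit L ≠ fun x => x ∘ (finRotate 3) := by
  obtain ⟨p, q, r, s, rfl⟩ := List.length_eq_four.mp hlen
  intro heq
  obtain ⟨i, j, hne⟩ := exists_circuit_four_ne_finRotate p.1 p.2 (hL p (by simp))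
    q.1 q.2 (hL q (by simp)) r.1 r.2 (hL r (by simp)) s.1 s.2 (hL s (by simp))
  exact hne (congrFun (congrFun heq _) j)
end

section
/- On three qubits, no list of exactly five CNOT gates has composition equal to the cyclic-shift permutation gate x ↦ x ∘ c, where c : Fin 3 → Fin 3 is the 3-cycle sending j to j+1 (mod 3). -/
/-- Every five-gate circuit on three qubits differs from the cyclic shift on some basis state
with exactly one qubit set. -/
theorem exists_basis_circuit_ne_shift :
    ∀ a₁ b₁ : Fin 3, a₁ ≠ b₁ → ∀ a₂ b₂ : Fin 3, a₂ ≠ b₂ → ∀ a₃ b₃ : Fin 3, a₃ ≠ b₃ →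
    ∀ a₄ b₄ : Fin 3, a₄ ≠ b₄ → ∀ a₅ b₅ : Fin 3, a₅ ≠ b₅ →
    ∃ i j : Fin 3,
      circuit [(a₁, b₁), (a₂, b₂), (a₃, b₃), (a₄, b₄), (a₅, b₅)] (fun k => decide (k = i)) j
        ≠ decide (j + 1 = i) := by
  decide +kernel

/-- On three qubits, no list of exactly five CNOT gates realizes the cyclic shift
`j ↦ j + 1 (mod 3)`. -/
theorem no_five_cnot_cycle3 (L : List (Fin 3 × Fin 3))
    (hL : ∀ g ∈ L, g.1 ≠ g.2) (hlen : L.length = 5) :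
    circuit L ≠ fun x => x ∘ (finRotate 3) := by
  intro h
  obtain ⟨⟨a₁, b₁⟩, ⟨a₂, b₂⟩, ⟨a₃, b₃⟩, ⟨a₄, b₄⟩, ⟨a₅, b₅⟩, rfl⟩ :
      ∃ g₁ g₂ g₃ g₄ g₅, L = [g₁, g₂, g₃, g₄, g₅] := by
    match L, hlen with
    | [g₁, g₂, g₃, g₄, g₅], _ => exact ⟨g₁, g₂, g₃, g₄, g₅, rfl⟩
  simp only [List.forall_mem_cons] at hL
  obtain ⟨h₁, h₂, h₃, h₄, h₅, -⟩ := hL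
  obtain ⟨i, j, hij⟩ :=
    exists_basis_circuit_ne_shift a₁ b₁ h₁ a₂ b₂ h₂ a₃ b₃ h₃ a₄ b₄ h₄ a₅ b₅ h₅
  apply hij
  simp only [h, Function.comp_apply, finRotate_apply]
end

section
/- Six CNOT gates are both necessary and sufficient to realize the three-qubit cyclic shift: there exists a list of six CNOT gates on three qubits whose composition equals the permutation gate x ↦ x ∘ c (c the 3-cycle j ↦ j+1 mod 3), and no list of fewer than six CNOT gates has composition equal to this gate. -/
/-- Exhaustive search: no circuit of at most `n` CNOT gates takes the register `(p, q, r)` to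
`(2, 4, 1)`, where bit `k` of the three numbers records the `k`-th of several basis states processed
in parallel. -/
def shiftUnreachable : ℕ → ℕ → ℕ → ℕ → Bool
  | 0, p, q, r => !(p == 2 && q == 4 && r == 1)
  | n + 1, p, q, r => !(p == 2 && q == 4 && r == 1) &&
      shiftUnreachable n (q ^^^ p) q r && shiftUnreachable n (r ^^^ p) q r &&
      shiftUnreachable n p (p ^^^ q) r && shiftUnreachable n p (r ^^^ q) r &&
      shiftUnreachable n p q (p ^^^ r) && shiftUnreachable n p q (q ^^^ r)

theorem shiftUnreachable_ne {n p q r : ℕ} (h : shiftUnreachable n p q r = true) :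
    ¬(p = 2 ∧ q = 4 ∧ r = 1) := by
  rintro ⟨rfl, rfl, rfl⟩
  cases n <;> simp [shiftUnreachable] at h

theorem circuit_cons {n : ℕ} (g : Fin n × Fin n) (L : List (Fin n × Fin n)) (x : Fin n → Bool) :
    circuit (g :: L) x = circuit L (CNOT g.1 g.2 x) := rfl

/-- A CNOT gate acts on all basis states stored in a register by one bitwise xor. -/
theorem CNOT_testBit {n : ℕ} (a b : Fin n) (y : Fin n → ℕ) (k : ℕ) :
    CNOT a b (fun j => (y j).testBit k) =
      fun j => (Function.update y b (y a ^^^ y b) j).testBit k := by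
  funext j
  by_cases hj : j = b
  · subst hj
    simp [CNOT]
  · simp [CNOT, hj]

theorem not_circuit_eq_of_shiftUnreachable (L : List (Fin 3 × Fin 3)) :
    ∀ {n p q r : ℕ}, (∀ g ∈ L, g.1 ≠ g.2) → L.length ≤ n → shiftUnreachable n p q r = true →
      ¬∀ k, circuit L (fun j => (![p, q, r] j).testBit k) =
        fun j => (![2, 4, 1] j : ℕ).testBit k := by
  induction L with
  | nil =>
    intro n p q r _ _ h hc
    have hy (j : Fin 3) : ![p, q, r] j = ![2, 4, 1] j :=
      Nat.eq_of_testBit_eq fun k => congrFun (hc k) j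
    exact shiftUnreachable_ne h ⟨hy 0, hy 1, hy 2⟩
  | cons g L ih =>
    intro n p q r hL hn h hc
    obtain ⟨m, rfl⟩ : ∃ m, n = m + 1 := ⟨n - 1, by simp at hn; omega⟩
    have hm : L.length ≤ m := by simpa using hn
    have hL' : ∀ g ∈ L, g.1 ≠ g.2 := fun g hg => hL g (List.mem_cons_of_mem _ hg)
    have hg : g.1 ≠ g.2 := hL g List.mem_cons_self
    simp only [circuit_cons, CNOT_testBit] at hc
    simp only [shiftUnreachable, Bool.and_eq_true] at h
    obtain ⟨⟨⟨⟨⟨⟨-, h₁₀⟩, h₂₀⟩, h₀₁⟩, h₂₁⟩, h₀₂⟩, h₁₂⟩ := h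
    have advance {p' q' r' : ℕ} (h' : shiftUnreachable m p' q' r' = true)
        (hy : Function.update ![p, q, r] g.2 (![p, q, r] g.1 ^^^ ![p, q, r] g.2) =
          ![p', q', r']) : False := ih hL' hm h' (hy ▸ hc)
    obtain ⟨a, b⟩ := g
    fin_cases a <;> fin_cases b
    · exact hg rfl
    · exact advance h₀₁ (by ext j; fin_cases j <;> rfl)
    · exact advance h₀₂ (by ext j; fin_cases j <;> rfl)
    · exact advance h₁₀ (by ext j; fin_cases j <;> rfl)
    · exact hg rfl
    · exact advance h₁₂ (by ext j; fin_cases j <;> rfl)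
    · exact advance h₂₀ (by ext j; fin_cases j <;> rfl)
    · exact advance h₂₁ (by ext j; fin_cases j <;> rfl)
    · exact hg rfl

theorem shiftUnreachable_five : shiftUnreachable 5 1 2 4 = true := by
  decide +kernel

/-- Six CNOT gates are both necessary and sufficient to realize the three-qubit
cyclic shift `j ↦ j + 1 (mod 3)`. -/
theorem six_cnot_necessary_sufficient :
    (∃ L : List (Fin 3 × Fin 3), (∀ g ∈ L, g.1 ≠ g.2) ∧ L.length = 6 ∧
        circuit L = fun x => x ∘ (finRotate 3)) ∧
    (∀ L : List (Fin 3 × Fin 3), (∀ g ∈ L, g.1 ≠ g.2) → L.length < 6 →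
        circuit L ≠ fun x => x ∘ (finRotate 3)) := by
  constructor
  · refine ⟨[(0, 1), (1, 0), (0, 1), (1, 2), (2, 1), (1, 2)], by decide, rfl, ?_⟩
    funext x
    revert x
    decide
  · intro L hL hlen hc
    refine not_circuit_eq_of_shiftUnreachable L hL (Nat.le_of_lt_succ hlen)
      shiftUnreachable_five fun k => ?_
    rw [hc]
    funext j
    fin_cases j <;> simp
end

section
/- All n-cycles have the same CNOT cost: for any two permutations σ and σ' of Fin n that are both cycles of length n (i.e. each is a cycle whose support is all of Fin n), the least k such that some list of k CNOT gates realizes the permutation gate of σ equals the least k such that some list of k CNOT gates realizes the permutation gate of σ'. -/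
theorem CNOT_comp_perm {n : ℕ} (π : Equiv.Perm (Fin n)) (a b : Fin n) (x : Fin n → Bool) :
    CNOT (π a) (π b) x ∘ π = CNOT a b (x ∘ π) := by
  funext j
  simp [CNOT]

/-- Relabelling the qubits of a circuit by `π` conjugates its action by `x ↦ x ∘ π`. -/
theorem circuit_map_comp_perm {n : ℕ} (π : Equiv.Perm (Fin n)) (L : List (Fin n × Fin n))
    (x : Fin n → Bool) :
    circuit (L.map (Prod.map π π)) x ∘ π = circuit L (x ∘ π) := by
  induction L generalizing x with
  | nil => rfl
  | cons g L ih =>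
    change circuit (L.map (Prod.map π π)) (CNOT (π g.1) (π g.2) x) ∘ π =
      circuit L (CNOT g.1 g.2 (x ∘ π))
    rw [ih, CNOT_comp_perm]

theorem circuit_map_eq_conj {n : ℕ} {σ : Equiv.Perm (Fin n)} (π : Equiv.Perm (Fin n))
    {L : List (Fin n × Fin n)} (hL : circuit L = fun x => x ∘ σ) :
    circuit (L.map (Prod.map π π)) = fun x => x ∘ (π * σ * π⁻¹ : Equiv.Perm (Fin n)) := by
  funext x j
  have h := congrFun (circuit_map_comp_perm π L x) (π⁻¹ j)
  rw [hL] at h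
  simpa using h

/-- Conjugate permutations are realized by circuits of the same lengths. -/
theorem exists_circuit_of_isConj {n : ℕ} {σ τ : Equiv.Perm (Fin n)} (h : IsConj σ τ) {k : ℕ}
    (hk : ∃ L : List (Fin n × Fin n), (∀ g ∈ L, g.1 ≠ g.2) ∧ L.length = k ∧
      circuit L = fun x => x ∘ σ) :
    ∃ L : List (Fin n × Fin n), (∀ g ∈ L, g.1 ≠ g.2) ∧ L.length = k ∧
      circuit L = fun x => x ∘ τ := by
  obtain ⟨π, rfl⟩ := isConj_iff.1 h
  obtain ⟨L, hne, hlen, hL⟩ := hk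
  refine ⟨L.map (Prod.map π π), ?_, by rw [List.length_map, hlen], circuit_map_eq_conj π hL⟩
  intro g hg
  obtain ⟨g', hg', rfl⟩ := List.mem_map.1 hg
  exact fun heq => hne g' hg' (π.injective heq)

/-- All `n`-cycles have the same minimal CNOT cost. -/
theorem ncycles_same_cnot_cost {n : ℕ} (σ σ' : Equiv.Perm (Fin n))
    (hσ : σ.IsCycle ∧ σ.support = Finset.univ)
    (hσ' : σ'.IsCycle ∧ σ'.support = Finset.univ) :
    sInf {k : ℕ | ∃ L : List (Fin n × Fin n), (∀ g ∈ L, g.1 ≠ g.2) ∧ L.length = k ∧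
        circuit L = fun x => x ∘ σ} =
    sInf {k : ℕ | ∃ L : List (Fin n × Fin n), (∀ g ∈ L, g.1 ≠ g.2) ∧ L.length = k ∧
        circuit L = fun x => x ∘ σ'} := by
  have h : IsConj σ σ' := hσ.1.isConj hσ'.1 (by rw [hσ.2, hσ'.2])
  congr 1
  ext k
  exact ⟨exists_circuit_of_isConj h, exists_circuit_of_isConj h.symm⟩
end

section
/- Every reducible permutation is cheap: for n ≥ 2 and any permutation σ of Fin n that is not an n-cycle (i.e. it is not the case that σ is a cycle with support all of Fin n), there exists a list of at most 3(n-2) CNOT gates on n qubits whose composition equals the permutation gate x ↦ x ∘ σ. -/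
/-- `σ` is realized by some circuit of at most `k` CNOT gates. -/
def RealizableWithin {n : ℕ} (σ : Equiv.Perm (Fin n)) (k : ℕ) : Prop :=
  ∃ L : List (Fin n × Fin n), (∀ g ∈ L, g.1 ≠ g.2) ∧ L.length ≤ k ∧
    circuit L = fun x => x ∘ σ

namespace RealizableWithin

variable {n : ℕ}

theorem one (k : ℕ) : RealizableWithin (1 : Equiv.Perm (Fin n)) k :=
  ⟨[], by simp, by simp, rfl⟩

theorem mul {σ τ : Equiv.Perm (Fin n)} {k l : ℕ} (hσ : RealizableWithin σ k)
    (hτ : RealizableWithin τ l) : RealizableWithin (σ * τ) (k + l) := by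
  obtain ⟨L, hL, hLk, hLσ⟩ := hσ
  obtain ⟨M, hM, hMl, hMτ⟩ := hτ
  refine ⟨L ++ M, ?_, ?_, ?_⟩
  · intro g hg
    exact (List.mem_append.mp hg).elim (hL g) (hM g)
  · rw [List.length_append]
    omega
  · funext x
    have h : circuit (L ++ M) x = circuit M (circuit L x) := List.foldl_append
    rw [h, hLσ, hMτ]
    rfl

theorem swap (a b : Fin n) : RealizableWithin (Equiv.swap a b) 3 := by
  by_cases hab : a = b
  · subst hab
    rw [Equiv.swap_self]
    exact one 3
  · refine ⟨[(a, b), (b, a), (a, b)], by simp [hab, Ne.symm hab], by simp, ?_⟩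
    funext x j
    by_cases hja : j = a
    · subst hja
      simp only [circuit, CNOT, List.foldl_cons, List.foldl_nil, hab, if_true, if_false,
        Function.comp_apply, Equiv.swap_apply_left]
      cases x j <;> cases x b <;> rfl
    · by_cases hjb : j = b
      · subst hjb
        simp [circuit, CNOT, hab, hja]
      · simp [circuit, CNOT, hja, hjb, Equiv.swap_apply_of_ne_of_ne hja hjb]

/-- A permutation moving only points of a set of `k + 1` elements is a product of `k` swaps,
hence costs at most `3 * k` gates. -/
theorem of_fixed_outside {k : ℕ} {S : Finset (Fin n)} {σ : Equiv.Perm (Fin n)}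
    (hS : S.card = k + 1) (hσ : ∀ j ∉ S, σ j = j) : RealizableWithin σ (3 * k) := by
  induction k generalizing S σ with
  | zero =>
    obtain ⟨a, rfl⟩ := Finset.card_eq_one.mp hS
    have h : σ = 1 := by
      have hfix : ∀ j, j ≠ a → σ j = j := fun j hj => hσ j (by simpa using hj)
      ext j
      by_cases hj : j = a
      · subst hj
        by_contra hne
        have hne' : σ j ≠ j := fun h => hne (by rw [h]; rfl)
        exact hne' (σ.injective (hfix _ hne'))
      · rw [hfix j hj]
        rfl
    rw [h]
    exact one _
  | succ k ih =>
    obtain ⟨a, ha⟩ : S.Nonempty := Finset.card_pos.mp (by omega)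
    have haS : σ a ∈ S := by
      by_contra h
      exact h (by rwa [σ.injective (hσ _ h)])
    have hτ : RealizableWithin (Equiv.swap a (σ a) * σ) (3 * k) := by
      refine ih (S := S.erase a) (by rw [Finset.card_erase_of_mem ha]; omega) fun j hj => ?_
      by_cases hja : j = a
      · simp [hja]
      · have hjS : j ∉ S := fun h => hj (Finset.mem_erase.mpr ⟨hja, h⟩)
        rw [Equiv.Perm.mul_apply, hσ j hjS]
        exact Equiv.swap_apply_of_ne_of_ne hja fun h => hjS (h ▸ haS)
    have h := (swap a (σ a)).mul hτ
    rw [← mul_assoc, Equiv.swap_mul_self, one_mul] at h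
    rwa [Nat.mul_succ, Nat.add_comm]

end RealizableWithin

/-- Every reducible permutation (i.e. not an `n`-cycle) of `n ≥ 2` qubits can be
realized by at most `3(n-2)` CNOT gates. -/
theorem reducible_perm_cnot_le {n : ℕ} (hn : 2 ≤ n) (σ : Equiv.Perm (Fin n))
    (hσ : ¬(σ.IsCycle ∧ σ.support = Finset.univ)) :
    ∃ L : List (Fin n × Fin n), (∀ g ∈ L, g.1 ≠ g.2) ∧ L.length ≤ 3 * (n - 2) ∧
      circuit L = fun x => x ∘ σ := by
  classical
  let a : Fin n := ⟨0, by omega⟩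
  let S : Finset (Fin n) := Finset.univ.filter fun j => σ.SameCycle a j
  have hmem : ∀ j, j ∈ S ↔ σ.SameCycle a j := fun j => by simp [S]
  have hpos : 0 < S.card := Finset.card_pos.mpr ⟨a, (hmem a).mpr (Equiv.Perm.SameCycle.refl σ a)⟩
  have hcompl : 0 < Sᶜ.card := by
    rw [Finset.card_pos, Finset.nonempty_iff_ne_empty]
    intro h
    have hall : ∀ j, σ.SameCycle a j := fun j => by
      rw [← hmem, (Finset.compl_eq_empty_iff S).mp h]
      exact Finset.mem_univ j
    have hmove : ∀ j, σ j ≠ j := fun j hj => by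
      have hfix : ∀ i, i = j := fun i =>
        (((hall j).symm.trans (hall i)).eq_of_left hj).symm
      have h01 := (hfix ⟨0, by omega⟩).trans (hfix ⟨1, by omega⟩).symm
      simp at h01
    refine hσ ⟨⟨a, hmove a, fun j _ => hall j⟩, ?_⟩
    ext j
    simp [hmove j]
  have hcard : S.card + Sᶜ.card = n := by simp
  have hcycle : RealizableWithin (σ.cycleOf a) (3 * (S.card - 1)) :=
    .of_fixed_outside (S := S) (by omega) fun j hj =>
      Equiv.Perm.cycleOf_apply_of_not_sameCycle (mt (hmem j).mpr hj)
  have hrest : RealizableWithin ((σ.cycleOf a)⁻¹ * σ) (3 * (Sᶜ.card - 1)) := by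
    refine .of_fixed_outside (S := Sᶜ) (by omega) fun j hj => ?_
    have hj' : σ.SameCycle a j := by rwa [← hmem, ← Finset.notMem_compl]
    rw [Equiv.Perm.mul_apply, Equiv.Perm.inv_eq_iff_eq, hj'.cycleOf_apply]
  have h := hcycle.mul hrest
  rw [mul_inv_cancel_left] at h
  have hlen : 3 * (S.card - 1) + 3 * (Sᶜ.card - 1) = 3 * (n - 2) := by omega
  rwa [hlen] at h
end

section
/- For every n ≥ 1 and every permutation σ of Fin n, there exists a list of at most 3(n-1) CNOT gates on n qubits whose composition equals the permutation gate x ↦ x ∘ σ. -/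
theorem circuit_append {n : ℕ} (L M : List (Fin n × Fin n)) (x : Fin n → Bool) :
    circuit (L ++ M) x = circuit M (circuit L x) :=
  List.foldl_append

/-- Three alternating CNOT gates exchange two qubits. -/
theorem circuit_swap {n : ℕ} {a b : Fin n} (hab : a ≠ b) (x : Fin n → Bool) :
    circuit [(a, b), (b, a), (a, b)] x = x ∘ Equiv.swap a b := by
  funext j
  by_cases hja : j = a
  · subst hja
    cases h : x j <;> cases hx : x b <;> simp [circuit, CNOT, hab, h, hx]
  · by_cases hjb : j = b
    · subst hjb
      cases h : x a <;> cases hx : x j <;> simp [circuit, CNOT, hab, hja, h, hx]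
    · simp [circuit, CNOT, hja, hjb, Equiv.swap_apply_of_ne_of_ne]

/-- A permutation fixing every index outside `s` needs at most `3 * (s.card - 1)` CNOT gates. -/
theorem exists_circuit_of_fixed_off {n : ℕ} (s : Finset (Fin n)) (σ : Equiv.Perm (Fin n))
    (hσ : ∀ i ∉ s, σ i = i) :
    ∃ L : List (Fin n × Fin n), (∀ g ∈ L, g.1 ≠ g.2) ∧ L.length ≤ 3 * (s.card - 1) ∧
      circuit L = fun x => x ∘ σ := by
  induction s using Finset.induction_on generalizing σ with
  | empty =>
    have h_one : σ = 1 := Equiv.ext fun i => hσ i (Finset.notMem_empty i)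
    exact ⟨[], by simp, by simp, by subst h_one; rfl⟩
  | insert a t ha ih =>
    rw [Finset.card_insert_of_notMem ha]
    by_cases hfix : σ a = a
    · obtain ⟨L, hL, hlen, hcirc⟩ := ih σ fun i hi => by
        by_cases hia : i = a
        · rw [hia, hfix]
        · exact hσ i (by simp [hia, hi])
      exact ⟨L, hL, by omega, hcirc⟩
    · have hmem : σ a ∈ t := by
        by_contra hnot
        exact hfix (σ.injective (hσ (σ a) (by simp [hfix, hnot])))
      have hpos : 0 < t.card := Finset.card_pos.mpr ⟨_, hmem⟩
      obtain ⟨L, hL, hlen, hcirc⟩ := ih (Equiv.swap a (σ a) * σ) fun i hi => by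
        by_cases hia : i = a
        · simp [hia]
        · have hi_fix : σ i = i := hσ i (by simp [hia, hi])
          have hne : i ≠ σ a := fun h => hi (h ▸ hmem)
          rw [Equiv.Perm.mul_apply, hi_fix, Equiv.swap_apply_of_ne_of_ne hia hne]
      have hne : a ≠ σ a := Ne.symm hfix
      refine ⟨[(a, σ a), (σ a, a), (a, σ a)] ++ L, ?_, ?_, ?_⟩
      · intro g hg
        rcases List.mem_append.mp hg with hg | hg
        · simp only [List.mem_cons, List.not_mem_nil, or_false] at hg
          rcases hg with rfl | rfl | rfl
          exacts [hne, hfix, hne]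
        · exact hL g hg
      · simp only [List.length_append, List.length_cons, List.length_nil]
        omega
      · funext x j
        rw [circuit_append, circuit_swap hne, hcirc]
        simp

/-- Every permutation of `n ≥ 1` qubits can be realized by at most `3(n-1)` CNOT gates. -/
theorem perm_cnot_le (n : ℕ) (hn : 1 ≤ n) (σ : Equiv.Perm (Fin n)) :
    ∃ L : List (Fin n × Fin n), (∀ g ∈ L, g.1 ≠ g.2) ∧ L.length ≤ 3 * (n - 1) ∧
      circuit L = fun x => x ∘ σ := by
  simpa using exists_circuit_of_fixed_off Finset.univ σ (by simp)
end

section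
/- On four qubits, no list of fewer than nine CNOT gates has composition equal to the cyclic-shift permutation gate x ↦ x ∘ c, where c : Fin 4 → Fin 4 is the 4-cycle sending j to j+1 (mod 4); together with the existence of a nine-gate circuit, the minimal CNOT cost C(4) equals 9. -/
theorem CNOT_involutive {n : ℕ} {a b : Fin n} (h : a ≠ b) :
    Function.Involutive (CNOT a b) := by
  intro x
  funext j
  by_cases hj : j = b <;> simp [CNOT, hj, h]

/-- Reversing a circuit inverts it. -/
theorem circuit_reverse_circuit {n : ℕ} (L : List (Fin n × Fin n))
    (hL : ∀ g ∈ L, g.1 ≠ g.2) (x : Fin n → Bool) : circuit L.reverse (circuit L x) = x := by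
  induction L generalizing x with
  | nil => rfl
  | cons g L ih =>
    rw [List.reverse_cons, circuit_append, circuit_cons g L,
      ih (fun g' hg' => hL g' (List.mem_cons_of_mem _ hg'))]
    exact CNOT_involutive (hL g List.mem_cons_self) x

/-- The values of a map of four-qubit basis states on the four weight-one states, packed into a
number: bit `4 * j + i` is coordinate `j` of the value at the `i`-th weight-one state. -/
def basisCode (f : (Fin 4 → Bool) → (Fin 4 → Bool)) : ℕ :=
  Nat.ofBits fun k : Fin 16 => f (fun i => i.val == k.val % 4) ⟨k.val / 4, by omega⟩

/-- The effect on `basisCode` of composing with `CNOT a b`. -/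
def gateCode (a b m : ℕ) : ℕ :=
  m ^^^ (((m >>> (4 * a)) &&& 15) <<< (4 * b))

theorem basisCode_CNOT (a b : Fin 4) (f : (Fin 4 → Bool) → (Fin 4 → Bool)) :
    basisCode (fun x => CNOT a b (f x)) = gateCode a b (basisCode f) := by
  have testBit_fifteen (i : ℕ) : Nat.testBit 15 i = decide (i < 4) :=
    Nat.testBit_two_pow_sub_one 4 i
  refine Nat.eq_of_testBit_eq fun k => ?_
  simp only [gateCode, basisCode, Nat.testBit_xor, Nat.testBit_shiftLeft, Nat.testBit_and,
    Nat.testBit_shiftRight, testBit_fifteen]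
  by_cases hk : k < 16
  · rw [Nat.testBit_ofBits_lt _ _ hk, Nat.testBit_ofBits_lt _ _ hk]
    by_cases hb : k / 4 = b.val
    · have hlt : 4 * a.val + (k - 4 * b.val) < 16 := by omega
      have hmod : (4 * a.val + (k - 4 * b.val)) % 4 = k % 4 := by omega
      have hdiv : (4 * a.val + (k - 4 * b.val)) / 4 = a.val := by omega
      have hge : 4 * b.val ≤ k := by omega
      have hsub : k - 4 * b.val < 4 := by omega
      rw [Nat.testBit_ofBits_lt _ _ hlt]
      simp [CNOT, hb, hmod, hdiv, hge, hsub, Bool.xor_comm]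
    · have hne : (⟨k / 4, by omega⟩ : Fin 4) ≠ b := fun h => hb (congrArg Fin.val h)
      have hrow : 4 * b.val ≤ k → ¬ k - 4 * b.val < 4 := by omega
      by_cases hge : 4 * b.val ≤ k
      · simp [CNOT, hne, hrow hge]
      · simp [CNOT, hne, hge]
  · have hge : 4 * b.val ≤ k := by omega
    have hrow : ¬ k - 4 * b.val < 4 := by omega
    rw [Nat.testBit_ofBits_ge _ _ (by omega), Nat.testBit_ofBits_ge _ _ (by omega)]
    simp [hge, hrow]

/-- Remove duplicates, and elements of the bit set `s`, from a list of numbers. -/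
def dedupBits : List ℕ → ℕ → List ℕ
  | [], _ => []
  | m :: l, s => bif s.testBit m then dedupBits l s else m :: dedupBits l (s ||| 2 ^ m)

theorem mem_dedupBits {m : ℕ} {l : List ℕ} (h : m ∈ l) (s : ℕ) :
    s.testBit m = true ∨ m ∈ dedupBits l s := by
  induction l generalizing s with
  | nil => simp at h
  | cons c l ih =>
    rw [dedupBits]
    by_cases hmc : m = c
    · subst hmc
      cases hs : s.testBit m <;> simp
    · have hm : m ∈ l := (List.mem_cons.1 h).resolve_left hmc
      cases hs : s.testBit c
      · have := ih hm (s ||| 2 ^ c)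
        rw [Nat.testBit_or, Nat.testBit_two_pow_of_ne (Ne.symm hmc)] at this
        simpa [hmc] using this
      · simpa using ih hm s

/-- The bit set of the members of a list, joined to `s`. -/
def bitSet : List ℕ → ℕ → ℕ
  | [], s => s
  | m :: l, s => bitSet l (s ||| 2 ^ m)

theorem testBit_bitSet {m : ℕ} {l : List ℕ} {s : ℕ} (h : s.testBit m = true ∨ m ∈ l) :
    (bitSet l s).testBit m = true := by
  induction l generalizing s with
  | nil => simpa [bitSet] using h
  | cons c l ih =>
    refine ih ?_
    rw [Nat.testBit_or]
    rcases h with h | h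
    · simp [h]
    · rcases List.mem_cons.1 h with rfl | h
      · simp [Nat.testBit_two_pow_self]
      · exact Or.inr h

/-- The control-target pairs of the four-qubit CNOT gates. -/
def gatePairs : List (ℕ × ℕ) :=
  [(0, 1), (0, 2), (0, 3), (1, 0), (1, 2), (1, 3), (2, 0), (2, 1), (2, 3), (3, 0), (3, 1), (3, 2)]

theorem mem_gatePairs : ∀ a b : Fin 4, a ≠ b → (a.val, b.val) ∈ gatePairs := by
  decide

/-- The codes reachable from those in a list by at most `k` gates. -/
def reachable : ℕ → List ℕ → List ℕ
  | 0, l => l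
  | k + 1, l =>
    reachable k (dedupBits (l ++ l.flatMap fun m => gatePairs.map fun g => gateCode g.1 g.2 m) 0)

theorem basisCode_circuit_mem_reachable (k : ℕ) (L : List (Fin 4 × Fin 4))
    (hL : ∀ g ∈ L, g.1 ≠ g.2) (hk : L.length ≤ k) (f : (Fin 4 → Bool) → (Fin 4 → Bool))
    (l : List ℕ) (hf : basisCode f ∈ l) :
    basisCode (fun x => circuit L (f x)) ∈ reachable k l := by
  induction k generalizing L f l with
  | zero =>
    obtain rfl : L = [] := List.length_eq_zero_iff.1 (Nat.le_zero.1 hk)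
    exact hf
  | succ k ih =>
    have mem_next {m : ℕ}
        (h : m ∈ l ++ l.flatMap fun m => gatePairs.map fun g => gateCode g.1 g.2 m) :=
      (mem_dedupBits h 0).resolve_left (by simp)
    cases L with
    | nil => exact ih [] hL (Nat.zero_le k) f _ (mem_next (List.mem_append_left _ hf))
    | cons g L =>
      refine ih L (fun g' hg' => hL g' (List.mem_cons_of_mem _ hg')) (Nat.le_of_succ_le_succ hk)
        (fun x => CNOT g.1 g.2 (f x)) _ (mem_next (List.mem_append_right _ ?_))
      rw [basisCode_CNOT]
      exact List.mem_flatMap.2 ⟨_, hf, List.mem_map.2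
        ⟨_, mem_gatePairs g.1 g.2 (hL g List.mem_cons_self), rfl⟩⟩

/-- Whether no member of a list lies in the bit set `s`. -/
def avoids (s : ℕ) (l : List ℕ) : Bool :=
  l.all fun m => !s.testBit m

theorem basisCode_id : basisCode (fun x => x) = 33825 := by
  decide +kernel

theorem basisCode_rotate : basisCode (fun x => x ∘ finRotate 4) = 6210 := by
  decide +kernel

theorem avoids_reachable_four :
    avoids (bitSet (reachable 4 [33825]) 0) (reachable 4 [6210]) = true := by
  decide +kernel

theorem circuit_ne_rotate_of_length_lt_nine (L : List (Fin 4 × Fin 4))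
    (hL : ∀ g ∈ L, g.1 ≠ g.2) (hlen : L.length < 9) :
    circuit L ≠ fun x => x ∘ finRotate 4 := by
  intro hC
  have meet : circuit (L.take 4) = fun x => circuit (L.drop 4).reverse (x ∘ finRotate 4) := by
    funext x
    have split : x ∘ finRotate 4 = circuit (L.drop 4) (circuit (L.take 4) x) := by
      rw [← circuit_append, List.take_append_drop, hC]
    rw [split, circuit_reverse_circuit _ fun g hg => hL g (List.mem_of_mem_drop hg)]
  have mem_left := basisCode_circuit_mem_reachable 4 (L.take 4)
    (fun g hg => hL g (List.mem_of_mem_take hg)) (by simp) (fun x => x) [33825]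
    (by simp [basisCode_id])
  have mem_right := basisCode_circuit_mem_reachable 4 (L.drop 4).reverse
    (fun g hg => hL g (List.mem_of_mem_drop (List.mem_reverse.1 hg)))
    (by rw [List.length_reverse, List.length_drop]; omega)
    (fun x => x ∘ finRotate 4) [6210] (by simp [basisCode_rotate])
  rw [← meet] at mem_right
  have not_mem := List.all_eq_true.1 avoids_reachable_four _ mem_right
  rw [testBit_bitSet (Or.inr mem_left)] at not_mem
  exact Bool.false_ne_true not_mem

/-- Three adjacent swaps, of three gates each, realize the four-cycle. -/
theorem circuit_nine_gates_eq_rotate :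
    circuit [((0 : Fin 4), (1 : Fin 4)), (1, 0), (0, 1), (1, 2), (2, 1), (1, 2), (2, 3), (3, 2),
      (2, 3)] = fun x => x ∘ finRotate 4 := by
  decide +kernel

/-- On four qubits, no list of fewer than nine CNOT gates realizes the cyclic shift
`j ↦ j + 1 (mod 4)`; together with the existence of a nine-gate circuit, the minimal
CNOT cost `C(4)` equals `9`. -/
theorem cycle4_needs_nine_cnot :
    (∀ L : List (Fin 4 × Fin 4), (∀ g ∈ L, g.1 ≠ g.2) → L.length < 9 →
        circuit L ≠ fun x => x ∘ (finRotate 4)) ∧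
    sInf {k : ℕ | ∃ L : List (Fin 4 × Fin 4), (∀ g ∈ L, g.1 ≠ g.2) ∧ L.length = k ∧
        circuit L = fun x => x ∘ (finRotate 4)} = 9 := by
  refine ⟨circuit_ne_rotate_of_length_lt_nine, ?_⟩
  refine IsLeast.csInf_eq ⟨⟨_, by decide, rfl, circuit_nine_gates_eq_rotate⟩, ?_⟩
  rintro _ ⟨L, hL, rfl, hC⟩
  exact not_lt.1 fun hlen => circuit_ne_rotate_of_length_lt_nine L hL hlen hC
end
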